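/- Let L ≥ 1 and let S_L denote the space of finite spherical harmonic expansions of maximal degree L on the unit sphere S² ⊂ ℝ³, i.e., the space of restrictions to S² of complex polynomials on ℝ³ of degree at most L. Let t_{L,L} ∈ (0,1) be the largest zero of the Legendre polynomial P_L, and for y ∈ S² let C_{t_{L,L}}(y) = {x ∈ S² : ⟨x,y⟩ ≥ t_{L,L}} be the spherical cap of angle arccos(t_{L,L}) centered at y. Define ρ_{S²}(Ω,L) = sup_{y∈S²} |Ω ∩ C_{t_{L,L}}(y)| / |C_{t_{L,L}}(y)| and B_L = (1 − t_{L,L}) · (∫_{t_{L,L}}^1 P_L(t)² dt)^{−1}. Then for every measurable Ω ⊆ S² and every nonzero f ∈ S_L, ∫_Ω |f|² dσ ≤ B_L · ρ_{S²}(Ω,L) · ∫_{S²} |f|² dσ, i.e. λ₂(Ω, S_L) ≤ B_L · ρ_{S²}(Ω,L). -/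

import Mathlib

open MeasureTheory

/-- The degree-`n` Legendre polynomial, via the Rodrigues formula
`P_n(x) = (1 / (2ⁿ n!)) dⁿ/dxⁿ (x² - 1)ⁿ`, normalized so that `P_n(1) = 1`. -/
noncomputable def legendrePoly (n : ℕ) : Polynomial ℝ :=
  Polynomial.C (1 / ((2 : ℝ) ^ n * n.factorial)) *
    (Polynomial.derivative)^[n] ((Polynomial.X ^ 2 - 1) ^ n)

/-!
Let `T` be the convolution with the zonal kernel `h = P_L · 1_[t, 1]`, a Legendre kernel truncated
to a cap. By the Funk–Hecke formula `T` acts on the spherical harmonics of degree `k` as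
multiplication by `2π ∫_t^1 P_L P_k`. To the right of the largest zero of `P_L` one has
`0 < P_L ≤ P_k` for all `k ≤ L`: by the Legendre equation the Wronskian of `P_k` and `P_L` has a
sign there, so `P_k / P_L` decreases to its value `1` at the pole. Hence `T` is invertible on
`S_L`, with an inverse of norm at most `(2π c)⁻¹`, where `c = ∫_t^1 P_L²`. Write `f = T g`. As
`h` lives on a cap, Cauchy–Schwarz gives `|f(y)|² ≤ 2π c ∫_{C_t(y)} |g|²`. Integrating over
`y ∈ Ω` and exchanging the integrals produces the factor `|Ω ∩ C_t(x)|`, while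
`|C_t(x)| = 2π (1 - t)` by the hat-box theorem of Archimedes.
-/

namespace legendrePoly

open Polynomial

theorem derivative_one_sub_sq_mul_derivative (n : ℕ) :
    derivative ((1 - X ^ 2) * derivative (legendrePoly n)) =
      -C ((n : ℝ) * (n + 1)) * legendrePoly n := by
  set u : ℝ[X] := (X ^ 2 - 1) ^ n with hu
  set v := derivative^[n] u with hv
  have first_order : derivative u * X * X - derivative u = C (2 * (n : ℝ)) * (u * X) := by
    rcases n with _ | n
    · simp [hu]
    · rw [hu, derivative_pow_succ]
      simp only [derivative_sub, derivative_one, derivative_X_pow, map_mul, map_natCast, map_ofNat,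
        map_add, map_one, Nat.cast_add, Nat.cast_one]
      ring
  have shift (k : ℕ) : derivative^[k] (derivative u) = derivative^[k + 1] u :=
    (Function.iterate_succ_apply _ _ _).symm
  have shift_smul : n • derivative^[n - 1] (derivative u) = n • v := by
    rcases n with _ | n
    · simp
    · rw [Nat.add_sub_cancel, shift]
  have second_order : (1 - X ^ 2) * derivative (derivative v) - 2 * X * derivative v =
      -C ((n : ℝ) * (n + 1)) * v := by
    have leibniz := congrArg derivative^[n + 1] first_order
    simp only [iterate_derivative_sub, iterate_derivative_C_mul, iterate_derivative_mul_X,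
      Nat.add_sub_cancel, shift_smul] at leibniz
    simp only [shift, Function.iterate_succ_apply', ← hv, nsmul_eq_mul, Nat.cast_add, Nat.cast_one,
      map_mul, map_ofNat, map_natCast, map_add, map_one] at leibniz ⊢
    linear_combination -leibniz
  rw [legendrePoly, ← hu, ← hv, derivative_C_mul, mul_left_comm, derivative_C_mul,
    derivative_mul, mul_left_comm, ← second_order]
  simp only [derivative_sub, derivative_one, derivative_X_pow, map_natCast]
  ring

protected theorem eval_one (n : ℕ) : (legendrePoly n).eval 1 = 1 := by
  have factor : (X ^ 2 - 1 : ℝ[X]) ^ n = (X - C 1) ^ n * (X + 1) ^ n := by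
    rw [← mul_pow, C_1]; ring
  rw [legendrePoly, factor, iterate_derivative_mul, eval_mul, eval_finsetSum,
    Finset.sum_eq_single_of_mem 0 (Finset.mem_range.mpr n.succ_pos)]
  · have := n.factorial_ne_zero
    simp only [Nat.choose_zero_right, one_smul, eval_mul, Nat.sub_zero,
      iterate_derivative_X_sub_pow_self, Function.iterate_zero_apply, eval_natCast, eval_C,
      eval_pow, eval_add, eval_X, Polynomial.eval_one]
    norm_num
    field_simp
  · intro k hk hk0
    rw [iterate_derivative_X_sub_pow, eval_smul, eval_mul, eval_smul, eval_pow,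
      Nat.sub_sub_self (Finset.mem_range_succ_iff.mp hk), eval_sub, eval_X, eval_C, sub_self,
      zero_pow hk0, smul_zero, zero_mul, smul_zero]

theorem degree_eq (n : ℕ) : (legendrePoly n).degree = n := by
  have hmonic : (X ^ 2 - 1 : ℝ[X]).Monic := by
    simpa using monic_X_pow_sub_C (1 : ℝ) two_ne_zero
  have hdeg : ((X ^ 2 - 1 : ℝ[X]) ^ n).natDegree = n + n := by
    have : (X ^ 2 - 1 : ℝ[X]).natDegree = 2 := by compute_degree!
    rw [hmonic.natDegree_pow, this, mul_two]
  have hcoeff : ((X ^ 2 - 1 : ℝ[X]) ^ n).coeff (n + n) = 1 := hdeg ▸ (hmonic.pow n).coeff_natDegree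
  refine degree_eq_of_le_of_coeff_ne_zero ?_ ?_
  · refine natDegree_le_iff_degree_le.mp ((natDegree_C_mul_le _ _).trans
      ((natDegree_iterate_derivative _ _).trans ?_))
    omega
  · have hfact := n.factorial_ne_zero
    have hdesc : (n + n).descFactorial n ≠ 0 := by
      rw [Ne, Nat.descFactorial_eq_zero_iff_lt]; omega
    rw [legendrePoly, coeff_C_mul, coeff_iterate_derivative, hcoeff]
    simp [hfact, hdesc]

/-- The Wronskian of `P_k` and `P_n` weighted by `1 - X²`, the leading coefficient of the Legendre
differential equation. -/
noncomputable def wronskian (k n : ℕ) : ℝ[X] :=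
  (1 - X ^ 2) * (legendrePoly n * derivative (legendrePoly k) -
    derivative (legendrePoly n) * legendrePoly k)

theorem eval_wronskian_of_sq_eq_one (k n : ℕ) {x : ℝ} (hx : x ^ 2 = 1) :
    (wronskian k n).eval x = 0 := by
  simp [wronskian, hx]

theorem derivative_wronskian (k n : ℕ) :
    derivative (wronskian k n) =
      C ((n : ℝ) * (n + 1) - k * (k + 1)) * (legendrePoly k * legendrePoly n) := by
  have regroup : wronskian k n = legendrePoly n * ((1 - X ^ 2) * derivative (legendrePoly k)) -
      legendrePoly k * ((1 - X ^ 2) * derivative (legendrePoly n)) := by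
    rw [wronskian]; ring
  rw [regroup, derivative_sub, derivative_mul, derivative_mul (f := legendrePoly k),
    derivative_one_sub_sq_mul_derivative, derivative_one_sub_sq_mul_derivative, map_sub]
  ring

theorem hasDerivAt_wronskian (k n : ℕ) (x : ℝ) :
    HasDerivAt (fun x => (wronskian k n).eval x)
      (((n : ℝ) * (n + 1) - k * (k + 1)) *
        ((legendrePoly k).eval x * (legendrePoly n).eval x)) x := by
  simpa only [derivative_wronskian, eval_mul, eval_C] using (wronskian k n).hasDerivAt x

theorem integral_mul_eq_zero {k n : ℕ} (h : k ≠ n) :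
    ∫ s in (-1 : ℝ)..1, (legendrePoly k).eval s * (legendrePoly n).eval s = 0 := by
  have ftc := intervalIntegral.integral_eq_sub_of_hasDerivAt (a := (-1 : ℝ)) (b := 1)
    (fun x _ => hasDerivAt_wronskian k n x) (Continuous.intervalIntegrable (by fun_prop) _ _)
  rw [intervalIntegral.integral_const_mul, eval_wronskian_of_sq_eq_one k n (one_pow 2),
    eval_wronskian_of_sq_eq_one k n neg_one_sq, sub_zero] at ftc
  refine (mul_eq_zero.mp ftc).resolve_left ?_
  have factor : (n : ℝ) * (n + 1) - k * (k + 1) = (n - k) * (n + k + 1) := by ring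
  rw [factor]
  exact mul_ne_zero (sub_ne_zero.mpr (Nat.cast_injective.ne h.symm)) (by positivity)

theorem integral_sq_pos (n : ℕ) {a : ℝ} (ha : a < 1) :
    0 < ∫ s in a..1, (legendrePoly n).eval s ^ 2 :=
  intervalIntegral.integral_pos ha (by fun_prop) (fun _ _ => sq_nonneg _)
    ⟨1, ⟨ha.le, le_rfl⟩, by simp [legendrePoly.eval_one]⟩

theorem eval_pos_of_forall_ne_zero {n : ℕ} {r s : ℝ} (hs : s ∈ Set.Ioc r 1)
    (h : ∀ z ∈ Set.Ioc r 1, (legendrePoly n).eval z ≠ 0) : 0 < (legendrePoly n).eval s := by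
  by_contra! hneg
  obtain ⟨z, hz, hz0⟩ := intermediate_value_Icc hs.2 (legendrePoly n).continuous.continuousOn
    ⟨hneg, by simp [legendrePoly.eval_one]⟩
  exact h z ⟨hs.1.trans_le hz.1, hz.2⟩ hz0

theorem eval_wronskian_nonpos {k n : ℕ} (hkn : k ≤ n) {r : ℝ} (hr : r ≤ 1)
    (hk : ∀ s ∈ Set.Ioc r 1, 0 < (legendrePoly k).eval s)
    (hn : ∀ s ∈ Set.Ioc r 1, 0 < (legendrePoly n).eval s) : (wronskian k n).eval r ≤ 0 := by
  have hmono : MonotoneOn (fun x => (wronskian k n).eval x) (Set.Icc r 1) := by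
    refine monotoneOn_of_deriv_nonneg (convex_Icc r 1) (wronskian k n).continuous.continuousOn
      (wronskian k n).differentiable.differentiableOn fun x hx => ?_
    have hx' : x ∈ Set.Ioc r 1 := Set.Ioo_subset_Ioc_self (interior_Icc.subset hx)
    have hkn' : (k : ℝ) ≤ n := Nat.cast_le.mpr hkn
    rw [(hasDerivAt_wronskian k n x).deriv]
    refine mul_nonneg (sub_nonneg.mpr ?_) (mul_pos (hk x hx') (hn x hx')).le
    gcongr
  rw [← eval_wronskian_of_sq_eq_one k n (one_pow 2)]
  exact hmono ⟨le_rfl, hr⟩ ⟨hr, le_rfl⟩ hr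

-- The sign of the Wronskian makes `P_k / P_n` decrease on `[r, 1]` to its value `1` at `1`.
theorem eval_le_eval_of_pos {k n : ℕ} (hkn : k ≤ n) {r : ℝ} (hr : r ∈ Set.Icc (-1 : ℝ) 1)
    (hk : ∀ s ∈ Set.Ioc r 1, 0 < (legendrePoly k).eval s)
    (hn : ∀ s ∈ Set.Icc r 1, 0 < (legendrePoly n).eval s) :
    (legendrePoly n).eval r ≤ (legendrePoly k).eval r := by
  have hderiv : ∀ x ∈ Set.Icc r 1, HasDerivAt
      (fun x => (legendrePoly k).eval x / (legendrePoly n).eval x) _ x := fun x hx =>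
    ((legendrePoly k).hasDerivAt x).div ((legendrePoly n).hasDerivAt x) (hn x hx).ne'
  have hanti : AntitoneOn (fun x => (legendrePoly k).eval x / (legendrePoly n).eval x)
      (Set.Icc r 1) := by
    refine antitoneOn_of_deriv_nonpos (convex_Icc r 1)
      (fun x hx => (hderiv x hx).continuousAt.continuousWithinAt)
      (fun x hx => (hderiv x (interior_subset hx)).differentiableAt.differentiableWithinAt)
      fun x hx => ?_
    rw [(hderiv x (interior_subset hx)).deriv]
    rw [interior_Icc] at hx
    refine div_nonpos_of_nonpos_of_nonneg ?_ (sq_nonneg _)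
    have hW := eval_wronskian_nonpos hkn hx.2.le
      (fun s hs => hk s ⟨hx.1.trans hs.1, hs.2⟩) fun s hs => hn s ⟨(hx.1.trans hs.1).le, hs.2⟩
    have hweight : 0 < 1 - x ^ 2 := by nlinarith [hr.1, hx.1, hx.2]
    simp only [wronskian, eval_mul, eval_sub, Polynomial.eval_one, eval_pow, eval_X] at hW
    linarith [nonpos_of_mul_nonpos_right hW hweight]
  have hratio := hanti ⟨le_rfl, hr.2⟩ ⟨hr.2, le_rfl⟩ hr.2
  simp only [legendrePoly.eval_one, div_one] at hratio
  rwa [one_le_div (hn r ⟨le_rfl, hr.2⟩)] at hratio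

-- At the largest zero of `P_k` in `(t, 1]` the comparison would give `P_n ≤ 0`.
theorem eval_pos_of_le {k n : ℕ} (hkn : k ≤ n) {t : ℝ} (ht : -1 ≤ t)
    (hn : ∀ s ∈ Set.Ioc t 1, 0 < (legendrePoly n).eval s) {s : ℝ} (hs : s ∈ Set.Ioc t 1) :
    0 < (legendrePoly k).eval s := by
  refine eval_pos_of_forall_ne_zero hs fun z hz hz0 => ?_
  have hclosed : IsClosed {x | (legendrePoly k).eval x = 0} :=
    isClosed_eq (legendrePoly k).continuous continuous_const
  obtain ⟨r, ⟨hr, hr0⟩, hrmax⟩ := (isCompact_Icc.inter_right hclosed).exists_isGreatest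
    ⟨z, ⟨le_rfl, hz.2⟩, hz0⟩
  have htr : t < r := hz.1.trans_le hr.1
  have hk : ∀ x ∈ Set.Ioc r 1, 0 < (legendrePoly k).eval x := fun x hx =>
    eval_pos_of_forall_ne_zero hx fun w hw hw0 =>
      (hrmax ⟨⟨hr.1.trans hw.1.le, hw.2⟩, hw0⟩).not_gt hw.1
  have hle := eval_le_eval_of_pos hkn ⟨ht.trans htr.le, hr.2⟩ hk
    fun x hx => hn x ⟨htr.trans_le hx.1, hx.2⟩
  exact (hn r ⟨htr, hr.2⟩).not_ge (hle.trans_eq hr0)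

theorem eval_le_eval_of_forall_zero_le {k n : ℕ} (hkn : k ≤ n) {t : ℝ} (ht : -1 ≤ t)
    (hmax : ∀ s, (legendrePoly n).eval s = 0 → s ≤ t) {s : ℝ} (hs : s ∈ Set.Ioc t 1) :
    0 < (legendrePoly n).eval s ∧ (legendrePoly n).eval s ≤ (legendrePoly k).eval s := by
  have hn : ∀ x ∈ Set.Ioc t 1, 0 < (legendrePoly n).eval x := fun x hx =>
    eval_pos_of_forall_ne_zero hx fun z hz hz0 => (hmax z hz0).not_gt hz.1
  refine ⟨hn s hs, eval_le_eval_of_pos hkn ⟨ht.trans hs.1.le, hs.2⟩ (fun x hx => ?_) fun x hx => ?_⟩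
  · exact eval_pos_of_le hkn ht hn ⟨hs.1.trans hx.1, hx.2⟩
  · exact hn x ⟨hs.1.trans_le hx.1, hx.2⟩

/-- The Legendre polynomials with complex coefficients, as a sequence of polynomials of degrees
`0, 1, 2, …`, so that they form a basis of `ℂ[X]`. -/
noncomputable def complexSequence : Sequence ℂ where
  elems' n := (legendrePoly n).map (algebraMap ℝ ℂ)
  degree_eq' n := (degree_map _ _).trans (degree_eq n)

theorem eval_complexSequence (n : ℕ) (s : ℝ) :
    (complexSequence n).eval (s : ℂ) = (((legendrePoly n).eval s : ℝ) : ℂ) :=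
  (eval_map_apply (algebraMap ℝ ℂ) s).trans rfl

theorem exists_eq_sum {n : ℕ} {G : ℂ[X]} (hG : G.natDegree ≤ n) :
    ∃ c : ℕ → ℂ, G = ∑ k ∈ Finset.range (n + 1), c k • complexSequence k := by
  have hmem : G ∈ Submodule.span ℂ (complexSequence '' Set.Iic n) := by
    rw [complexSequence.span_degreeLE fun k _ =>
      isUnit_iff_ne_zero.mpr (leadingCoeff_ne_zero.mpr (complexSequence.ne_zero k))]
    exact mem_degreeLE.mpr (natDegree_le_iff_degree_le.mp hG)
  have hIic : Set.Iic n = (Finset.range (n + 1) : Set ℕ) := by ext; simp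
  rw [hIic, Submodule.mem_span_image_finset_iff_exists_fun'] at hmem
  exact hmem.imp fun _ h => h.symm

end legendrePoly

namespace SphericalLargeSieve

open scoped RealInnerProductSpace ComplexConjugate Pointwise

section UnitSphere

variable {E : Type*} [NormedAddCommGroup E] [NormedSpace ℝ E]

/-- The self-homeomorphism of the unit sphere induced by a linear isometry. -/
def sphereHomeomorph (Φ : E ≃ₗᵢ[ℝ] E) : Metric.sphere (0 : E) 1 ≃ₜ Metric.sphere (0 : E) 1 :=
  Φ.toHomeomorph.subtype fun x => by simp

@[simp]
theorem coe_sphereHomeomorph (Φ : E ≃ₗᵢ[ℝ] E) (x : Metric.sphere (0 : E) 1) :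
    (sphereHomeomorph Φ x : E) = Φ x :=
  rfl

variable [MeasurableSpace E] [BorelSpace E]

theorem measurePreserving_sphereHomeomorph {Φ : E ≃ₗᵢ[ℝ] E} {μ : Measure E}
    (hΦ : MeasurePreserving Φ μ μ) :
    MeasurePreserving (sphereHomeomorph Φ) μ.toSphere μ.toSphere := by
  refine ⟨(sphereHomeomorph Φ).measurable, Measure.ext fun s hs => ?_⟩
  have hcone : Φ ⁻¹' (Set.Ioo (0 : ℝ) 1 • (Subtype.val '' s)) =
      Set.Ioo (0 : ℝ) 1 • (Subtype.val '' (sphereHomeomorph Φ ⁻¹' s)) := by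
    ext z
    simp only [Set.mem_preimage, Set.mem_smul, Set.mem_image]
    constructor
    · rintro ⟨r, hr, _, ⟨x, hx, rfl⟩, hz⟩
      refine ⟨r, hr, _, ⟨(sphereHomeomorph Φ).symm x, by simpa using hx, rfl⟩, Φ.injective ?_⟩
      rw [map_smul, ← coe_sphereHomeomorph, Homeomorph.apply_symm_apply, hz]
    · rintro ⟨r, hr, _, ⟨x, hx, rfl⟩, rfl⟩
      exact ⟨r, hr, _, ⟨_, hx, rfl⟩, by simp⟩
  rw [Measure.map_apply (sphereHomeomorph Φ).measurable hs,
    μ.toSphere_apply' ((sphereHomeomorph Φ).measurable hs), μ.toSphere_apply' hs, ← hcone,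
    hΦ.measure_preimage_emb Φ.toHomeomorph.measurableEmbedding]

theorem integral_volumeIoiPow (n : ℕ) (g : ℝ → ℝ) :
    ∫ r : Set.Ioi (0 : ℝ), g r ∂Measure.volumeIoiPow n = ∫ r in Set.Ioi (0 : ℝ), r ^ n * g r := by
  simp only [Measure.volumeIoiPow, ENNReal.ofReal]
  rw [integral_withDensity_eq_integral_smul (measurable_subtype_coe.pow_const _).real_toNNReal,
    integral_subtype_comap measurableSet_Ioi fun r => Real.toNNReal (r ^ n) • g r]
  refine setIntegral_congr_fun measurableSet_Ioi fun r hr => ?_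
  rw [NNReal.smul_def, Real.coe_toNNReal _ (pow_nonneg hr.out.le _), smul_eq_mul]

theorem integral_eq_integral_toSphere_mul [FiniteDimensional ℝ E] [Nontrivial E] (μ : Measure E)
    [μ.IsAddHaarMeasure] {F : E → ℝ} {f : Metric.sphere (0 : E) 1 → ℝ} {g : ℝ → ℝ}
    (hF : ∀ (x : Metric.sphere (0 : E) 1), ∀ r > 0, F (r • (x : E)) = f x * g r) :
    ∫ x, F x ∂μ = (∫ x, f x ∂μ.toSphere) *
      ∫ r in Set.Ioi (0 : ℝ), r ^ (Module.finrank ℝ E - 1) * g r := by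
  have hpolar : ∀ x : ({0}ᶜ : Set E), F x = f (homeomorphUnitSphereProd E x).1 *
      g (homeomorphUnitSphereProd E x).2 := fun x => by
    rw [← hF _ _ (homeomorphUnitSphereProd E x).2.2, ← homeomorphUnitSphereProd_symm_apply_coe,
      Homeomorph.symm_apply_apply]
  calc
    ∫ x, F x ∂μ = ∫ x : ({0}ᶜ : Set E), F x ∂μ.comap (↑) := by
      rw [integral_subtype_comap (measurableSet_singleton _).compl, restrict_compl_singleton]
    _ = ∫ z, f z.1 * g z.2 ∂μ.toSphere.prod (.volumeIoiPow (Module.finrank ℝ E - 1)) := by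
      simp only [hpolar]
      exact μ.measurePreserving_homeomorphUnitSphereProd.integral_comp
        (Homeomorph.measurableEmbedding _) fun z => f z.1 * g z.2
    _ = _ := by
      rw [integral_prod_mul f fun r : Set.Ioi (0 : ℝ) => g r, integral_volumeIoiPow]

end UnitSphere

section Moments

theorem integral_Ioi_pow_mul_exp_neg_sq (k : ℕ) :
    ∫ r in Set.Ioi (0 : ℝ), r ^ k * Real.exp (-r ^ 2) = Real.Gamma ((k + 1) / 2) / 2 := by
  have hk : (-1 : ℝ) < k := by linarith [(Nat.cast_nonneg k : (0 : ℝ) ≤ k)]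
  simpa only [Real.rpow_natCast, Real.rpow_ofNat, one_div, inv_mul_eq_div] using
    integral_rpow_mul_exp_neg_rpow two_pos hk

theorem integral_pow_mul_exp_neg_sq (k : ℕ) :
    ∫ z : ℝ, z ^ k * Real.exp (-z ^ 2) = (1 + (-1) ^ k) / 2 * Real.Gamma ((k + 1) / 2) := by
  have hk : (-1 : ℝ) < k := by linarith [(Nat.cast_nonneg k : (0 : ℝ) ≤ k)]
  have hint : Integrable fun z : ℝ => z ^ k * Real.exp (-z ^ 2) := by
    simpa using integrable_rpow_mul_exp_neg_mul_sq one_pos hk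
  have hneg : ∫ z in Set.Iic (0 : ℝ), z ^ k * Real.exp (-z ^ 2) =
      (-1) ^ k * (Real.Gamma ((k + 1) / 2) / 2) := by
    rw [← neg_zero, ← integral_comp_neg_Ioi 0 fun z : ℝ => z ^ k * Real.exp (-z ^ 2),
      ← integral_Ioi_pow_mul_exp_neg_sq, ← integral_const_mul]
    refine setIntegral_congr_fun measurableSet_Ioi fun z _ => ?_
    simp only [neg_sq]
    rw [neg_pow z, mul_assoc]
  rw [← integral_add_compl measurableSet_Ioi hint, Set.compl_Ioi, hneg,
    integral_Ioi_pow_mul_exp_neg_sq]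
  ring

variable {E : Type*} [NormedAddCommGroup E] [InnerProductSpace ℝ E] [FiniteDimensional ℝ E]

theorem exists_orthonormalBasis_apply_eq {ι : Type*} [Fintype ι]
    (hcard : Module.finrank ℝ E = Fintype.card ι) (i : ι) {x : E} (hx : ‖x‖ = 1) :
    ∃ b : OrthonormalBasis ι ℝ E, b i = x := by
  have hsub : Orthonormal ℝ (Set.domRestrict ({i} : Set ι) fun _ => x) :=
    ⟨fun _ => hx, fun j k hjk => absurd (Subsingleton.elim j k) hjk⟩
  obtain ⟨b, hb⟩ := hsub.exists_orthonormalBasis_extension_of_card_eq hcard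
  exact ⟨b, hb i rfl⟩

variable [MeasurableSpace E] [BorelSpace E]

theorem integral_inner_pow_mul_exp_neg_norm_sq {y : E} (hy : ‖y‖ = 1) (k : ℕ) :
    ∫ x : E, ⟪x, y⟫ ^ k * Real.exp (-‖x‖ ^ 2) =
      √Real.pi ^ (Module.finrank ℝ E - 1) *
        ((1 + (-1) ^ k) / 2 * Real.Gamma ((k + 1) / 2)) := by
  have : Nontrivial E := ⟨y, 0, norm_ne_zero_iff.mp (hy.trans_ne one_ne_zero)⟩
  obtain ⟨d, hd⟩ := Nat.exists_eq_succ_of_ne_zero (Module.finrank_pos (R := ℝ) (M := E)).ne'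
  obtain ⟨b, hb⟩ := exists_orthonormalBasis_apply_eq (hd.trans (Fintype.card_fin _).symm) 0 hy
  let F : Fin (d + 1) → ℝ → ℝ :=
    Fin.cons (fun s => s ^ k * Real.exp (-s ^ 2)) fun _ s => Real.exp (-s ^ 2)
  have hprod : ∀ x : E, ⟪x, y⟫ ^ k * Real.exp (-‖x‖ ^ 2) = ∏ i, F i (b.repr x i) := fun x => by
    rw [← b.repr.norm_map x, EuclideanSpace.real_norm_sq_eq, ← Finset.sum_neg_distrib, Real.exp_sum,
      Fin.prod_univ_succ, Fin.prod_univ_succ, b.repr_apply_apply, hb, real_inner_comm, ← mul_assoc]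
    rfl
  have hgauss : ∫ s : ℝ, Real.exp (-s ^ 2) = √Real.pi := by simpa using integral_gaussian 1
  simp only [hprod]
  rw [b.repr.measurePreserving.integral_comp b.repr.toHomeomorph.measurableEmbedding
      fun z => ∏ i, F i (z i),
    (PiLp.volume_preserving_ofLp (Fin (d + 1))).integral_comp
      (MeasurableEquiv.toLp 2 _).symm.measurableEmbedding fun z => ∏ i, F i (z i),
    integral_fintype_prod_volume_eq_prod, Fin.prod_univ_succ, hd, Nat.succ_sub_one]
  simp only [F, Fin.cons_zero, Fin.cons_succ, hgauss, integral_pow_mul_exp_neg_sq,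
    Finset.prod_const, Finset.card_univ, Fintype.card_fin]
  ring

theorem integral_inner_pow_toSphere_mul_Gamma (y : Metric.sphere (0 : E) 1) (k : ℕ) :
    (∫ x : Metric.sphere (0 : E) 1, ⟪(x : E), y⟫ ^ k ∂(volume : Measure E).toSphere) *
        Real.Gamma ((Module.finrank ℝ E + k) / 2) =
      √Real.pi ^ (Module.finrank ℝ E - 1) * ((1 + (-1) ^ k) * Real.Gamma ((k + 1) / 2)) := by
  have hy : ‖(y : E)‖ = 1 := norm_eq_of_mem_sphere y
  have : Nontrivial E := ⟨y, 0, norm_ne_zero_iff.mp (hy.trans_ne one_ne_zero)⟩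
  have hpos : 0 < Module.finrank ℝ E := Module.finrank_pos
  have hpolar := integral_eq_integral_toSphere_mul (volume : Measure E)
    (F := fun x => ⟪x, (y : E)⟫ ^ k * Real.exp (-‖x‖ ^ 2)) (f := fun x => ⟪(x : E), y⟫ ^ k)
    (g := fun r => r ^ k * Real.exp (-r ^ 2)) fun x r _ => by
      simp only [real_inner_smul_left, mul_pow, norm_smul, norm_eq_of_mem_sphere, mul_one,
        Real.norm_eq_abs, sq_abs]
      ring
  simp only [← mul_assoc, ← pow_add] at hpolar
  rw [integral_inner_pow_mul_exp_neg_norm_sq hy, integral_Ioi_pow_mul_exp_neg_sq, Nat.cast_add,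
    Nat.cast_pred hpos] at hpolar
  rw [show ((Module.finrank ℝ E : ℝ) + k) / 2 = (Module.finrank ℝ E - 1 + k + 1) / 2 by ring]
  linear_combination -2 * hpolar

theorem ext_of_forall_integral_pow_eq {a b : ℝ} {μ ν : Measure ℝ} [IsFiniteMeasure μ]
    [IsFiniteMeasure ν] (hμ : ∀ᵐ s ∂μ, s ∈ Set.Icc a b) (hν : ∀ᵐ s ∂ν, s ∈ Set.Icc a b)
    (h : ∀ k : ℕ, ∫ s, s ^ k ∂μ = ∫ s, s ^ k ∂ν) : μ = ν := by
  have hint {ρ : Measure ℝ} [IsFiniteMeasure ρ] (hρ : ∀ᵐ s ∂ρ, s ∈ Set.Icc a b) {g : ℝ → ℝ}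
      (hg : Continuous g) : Integrable g ρ := by
    obtain ⟨C, hC⟩ :=
      isCompact_Icc.exists_bound_of_continuousOn (hg.continuousOn (s := Set.Icc a b))
    exact .of_bound hg.aestronglyMeasurable C (hρ.mono hC)
  have hpoly (p : Polynomial ℝ) : ∫ s, p.eval s ∂μ = ∫ s, p.eval s ∂ν := by
    simp_rw [Polynomial.eval_eq_sum_range]
    rw [integral_finsetSum _ fun _ _ => hint hμ (by fun_prop),
      integral_finsetSum _ fun _ _ => hint hν (by fun_prop)]
    simp_rw [integral_const_mul, h]
  refine ext_of_forall_integral_eq_of_IsFiniteMeasure fun f =>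
    eq_of_abs_sub_le_all fun ε hε => ?_
  set M := μ.real Set.univ + ν.real Set.univ + 1
  have hM : 0 < M := by positivity
  obtain ⟨p, hp⟩ := exists_polynomial_near_of_continuousOn a b f f.continuous.continuousOn (ε / M)
    (by positivity)
  have hclose {ρ : Measure ℝ} [IsFiniteMeasure ρ] (hρ : ∀ᵐ s ∂ρ, s ∈ Set.Icc a b) :
      |∫ s, p.eval s ∂ρ - ∫ s, f s ∂ρ| ≤ ε / M * ρ.real Set.univ := by
    rw [← integral_sub (hint hρ p.continuous) (hint hρ f.continuous), ← Real.norm_eq_abs]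
    exact norm_integral_le_of_norm_le_const (hρ.mono fun s hs => (hp s hs).le)
  calc
    |∫ s, f s ∂μ - ∫ s, f s ∂ν| ≤
        |∫ s, p.eval s ∂μ - ∫ s, f s ∂μ| + |∫ s, p.eval s ∂ν - ∫ s, f s ∂ν| := by
      rw [← hpoly p, abs_sub_comm _ (∫ s, f s ∂μ)]
      exact abs_sub_le _ _ _
    _ ≤ ε / M * (μ.real Set.univ + ν.real Set.univ) := by
      rw [mul_add]
      exact add_le_add (hclose hμ) (hclose hν)
    _ ≤ ε / M * M := by gcongr; exact (lt_add_one _).le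
    _ = ε := div_mul_cancel₀ _ hM.ne'

end Moments

local notation "ℝ³" => EuclideanSpace ℝ (Fin 3)
local notation "S²" => Metric.sphere (0 : ℝ³) 1
local notation "σ" => Measure.toSphere (volume : Measure ℝ³)

theorem integral_inner_pow (y : S²) (k : ℕ) :
    ∫ x : S², ⟪(x : ℝ³), y⟫ ^ k ∂σ = 2 * Real.pi * ∫ s in (-1 : ℝ)..1, s ^ k := by
  have hk : (k : ℝ) + 1 ≠ 0 := by positivity
  have hΓ : Real.Gamma ((3 + k) / 2) = (k + 1) / 2 * Real.Gamma ((k + 1) / 2) := by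
    rw [← Real.Gamma_add_one (by positivity)]
    ring_nf
  have hΓ_ne : Real.Gamma (((k : ℝ) + 1) / 2) ≠ 0 := (Real.Gamma_pos_of_pos (by positivity)).ne'
  have hmoment := integral_inner_pow_toSphere_mul_Gamma y k
  rw [finrank_euclideanSpace_fin, Nat.add_one_sub_one, Real.sq_sqrt Real.pi_nonneg, Nat.cast_ofNat,
    hΓ, ← mul_assoc, ← mul_assoc] at hmoment
  have hcancel := mul_right_cancel₀ hΓ_ne hmoment
  rw [integral_pow]
  field_simp
  rw [pow_succ]
  linear_combination 2 * hcancel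

theorem inner_mem_Icc (x y : S²) : ⟪(x : ℝ³), y⟫ ∈ Set.Icc (-1 : ℝ) 1 := by
  simpa [abs_le] using abs_real_inner_le_norm (x : ℝ³) y

theorem map_inner_toSphere (y : S²) :
    Measure.map (fun x : S² => ⟪(x : ℝ³), y⟫) σ =
      ENNReal.ofReal (2 * Real.pi) • volume.restrict (Set.Icc (-1) 1) := by
  have hinner : AEMeasurable (fun x : S² => ⟪(x : ℝ³), y⟫) σ := by fun_prop
  have : IsFiniteMeasure (ENNReal.ofReal (2 * Real.pi) • volume.restrict (Set.Icc (-1 : ℝ) 1)) :=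
    Measure.smul_finite _ ENNReal.ofReal_ne_top
  refine ext_of_forall_integral_pow_eq (a := -1) (b := 1) ?_ ?_ fun k => ?_
  · exact (ae_map_iff hinner measurableSet_Icc).mpr (.of_forall fun x => inner_mem_Icc x y)
  · exact Measure.ae_smul_measure (ae_restrict_mem measurableSet_Icc) _
  · rw [integral_map hinner (by fun_prop), integral_inner_pow, integral_smul_measure,
      ENNReal.toReal_ofReal Real.two_pi_pos.le, smul_eq_mul, integral_Icc_eq_integral_Ioc,
      intervalIntegral.integral_of_le (by norm_num)]

section ZonalFunctions

variable {F : Type*} [NormedAddCommGroup F] {H : ℝ → F}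

theorem aestronglyMeasurable_comp_inner
    (hH : AEStronglyMeasurable H (volume.restrict (Set.Icc (-1) 1))) (y : S²) :
    AEStronglyMeasurable (fun x : S² => H ⟪(x : ℝ³), y⟫) σ := by
  refine AEStronglyMeasurable.comp_aemeasurable ?_ (by fun_prop)
  rw [map_inner_toSphere]
  exact hH.smul_measure _

theorem integrable_comp_inner (hH : IntegrableOn H (Set.Icc (-1) 1)) (y : S²) :
    Integrable (fun x : S² => H ⟪(x : ℝ³), y⟫) σ := by
  refine Integrable.comp_aemeasurable ?_ (by fun_prop)
  rw [map_inner_toSphere]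
  exact hH.smul_measure ENNReal.ofReal_ne_top

theorem integral_comp_inner [NormedSpace ℝ F]
    (hH : AEStronglyMeasurable H (volume.restrict (Set.Icc (-1) 1))) (y : S²) :
    ∫ x : S², H ⟪(x : ℝ³), y⟫ ∂σ = (2 * Real.pi) • ∫ s in (-1 : ℝ)..1, H s := by
  rw [← integral_map (φ := fun x : S² => ⟪(x : ℝ³), y⟫) (by fun_prop)
      (map_inner_toSphere y ▸ hH.smul_measure _), map_inner_toSphere, integral_smul_measure,
    ENNReal.toReal_ofReal Real.two_pi_pos.le, integral_Icc_eq_integral_Ioc,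
    intervalIntegral.integral_of_le (by norm_num)]

end ZonalFunctions

section TotalDegree

variable {R ι τ : Type*} [CommSemiring R]

theorem totalDegree_bind₁_le {φ : ι → MvPolynomial τ R} (hφ : ∀ i, (φ i).totalDegree ≤ 1)
    (p : MvPolynomial ι R) : (MvPolynomial.bind₁ φ p).totalDegree ≤ p.totalDegree := by
  rw [MvPolynomial.bind₁, MvPolynomial.aeval_def, MvPolynomial.eval₂_eq]
  refine MvPolynomial.totalDegree_finsetSum_le fun d hd => ?_
  calc
    _ ≤ _ := MvPolynomial.totalDegree_mul _ _
    _ ≤ 0 + ∑ i ∈ d.support, d i * 1 := by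
      refine add_le_add (MvPolynomial.totalDegree_C _).le
        ((MvPolynomial.totalDegree_finsetProd _ _).trans (Finset.sum_le_sum fun i _ => ?_))
      exact (MvPolynomial.totalDegree_pow _ _).trans (Nat.mul_le_mul_left _ (hφ i))
    _ ≤ p.totalDegree := by
      simpa [Finsupp.sum] using MvPolynomial.le_totalDegree hd

theorem totalDegree_aeval_le (P : Polynomial R) (q : MvPolynomial ι R) :
    (Polynomial.aeval q P).totalDegree ≤ P.natDegree * q.totalDegree := by
  rw [Polynomial.aeval_eq_sum_range]
  refine MvPolynomial.totalDegree_finsetSum_le fun k hk => ?_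
  calc
    _ ≤ (q ^ k).totalDegree := MvPolynomial.totalDegree_smul_le _ _
    _ ≤ k * q.totalDegree := MvPolynomial.totalDegree_pow _ _
    _ ≤ _ := Nat.mul_le_mul_right _ (Finset.mem_range_succ_iff.mp hk)

end TotalDegree

/-- The convolution `(H * f)(y) = ∫ H(⟨x, y⟩) f(x) dσ(x)` of a function on the sphere with a zonal
kernel. -/
noncomputable def zonalConv (H : ℝ → ℝ) (f : S² → ℂ) (y : S²) : ℂ :=
  ∫ x : S², (H ⟪(x : ℝ³), y⟫ : ℂ) * f x ∂σ

/-- Membership in the space `S_n` of restrictions to the sphere of complex polynomials of degree at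
most `n`. -/
def IsSphericalPolynomial (n : ℕ) (f : S² → ℂ) : Prop :=
  ∃ p : MvPolynomial (Fin 3) ℂ, p.totalDegree ≤ n ∧
    ∀ x : S², f x = MvPolynomial.eval (fun i => ((x : ℝ³) i : ℂ)) p

/-- The average of `g` over the circle `{x | ⟨x, y⟩ = s}` is `G s`. The averages are encoded by
testing against zonal kernels; the value at the degenerate circle `{y}` has to be prescribed
separately. -/
structure HasZonalMean (y : S²) (g : S² → ℂ) (G : Polynomial ℂ) : Prop where
  eval_one : G.eval 1 = g y
  zonalConv_eq : ∀ H : ℝ → ℝ, IntegrableOn H (Set.Icc (-1) 1) →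
    zonalConv H g y = 2 * Real.pi * ∫ s in (-1 : ℝ)..1, (H s : ℂ) * G.eval (s : ℂ)

theorem integrable_of_continuous {g : S² → ℂ} (hg : Continuous g) : Integrable g σ :=
  hg.integrable_of_hasCompactSupport (.of_compactSpace _)

section

variable {H : ℝ → ℝ} {y : S²}

theorem integrable_kernel_mul (hH : IntegrableOn H (Set.Icc (-1) 1)) {g : S² → ℂ}
    (hg : Continuous g) (y : S²) : Integrable (fun x : S² => (H ⟪(x : ℝ³), y⟫ : ℂ) * g x) σ := by
  obtain ⟨C, hC⟩ := isCompact_univ.exists_bound_of_continuousOn hg.continuousOn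
  have hkernel := integrable_comp_inner (H := fun s => (H s : ℂ)) hH.ofReal y
  exact hkernel.mul_bdd hg.aestronglyMeasurable (.of_forall fun x => hC x trivial)

theorem zonalConv_sum {ι : Type*} (s : Finset ι) (a : ι → ℂ) {g : ι → S² → ℂ}
    (hH : IntegrableOn H (Set.Icc (-1) 1)) (hg : ∀ i ∈ s, Continuous (g i)) :
    zonalConv H (fun x => ∑ i ∈ s, a i * g i x) y = ∑ i ∈ s, a i * zonalConv H (g i) y := by
  simp only [zonalConv, Finset.mul_sum, mul_left_comm _ (a _)]
  rw [integral_finsetSum s fun i hi => (integrable_kernel_mul hH (hg i hi) y).const_mul _]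
  simp only [integral_const_mul]

theorem HasZonalMean.sum {ι : Type*} {s : Finset ι} {a : ι → ℂ} {g : ι → S² → ℂ}
    {G : ι → Polynomial ℂ} (hg : ∀ i ∈ s, Continuous (g i))
    (h : ∀ i ∈ s, HasZonalMean y (g i) (G i)) :
    HasZonalMean y (fun x => ∑ i ∈ s, a i * g i x) (∑ i ∈ s, a i • G i) where
  eval_one := by
    rw [Polynomial.eval_finsetSum]
    exact Finset.sum_congr rfl fun i hi => by rw [Polynomial.eval_smul, (h i hi).eval_one]; rfl
  zonalConv_eq H hH := by
    have hint : ∀ i ∈ s, IntervalIntegrable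
        (fun r : ℝ => a i * ((H r : ℂ) * (G i).eval (r : ℂ))) volume (-1) 1 := fun i _ => by
      refine (IntervalIntegrable.mul_continuousOn ?_ (by fun_prop)).const_mul _
      rw [intervalIntegrable_iff_integrableOn_Icc_of_le (by norm_num)]
      exact hH.ofReal
    simp only [Polynomial.eval_finsetSum, Polynomial.eval_smul, smul_eq_mul, Finset.mul_sum,
      mul_left_comm _ (a _)]
    rw [zonalConv_sum s a hH hg, intervalIntegral.integral_finsetSum hint, Finset.mul_sum]
    refine Finset.sum_congr rfl fun i hi => ?_
    rw [(h i hi).zonalConv_eq H hH, intervalIntegral.integral_const_mul, mul_left_comm]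

theorem hasZonalMean_eval_inner (y : S²) (G : Polynomial ℂ) :
    HasZonalMean y (fun x => G.eval (⟪(x : ℝ³), y⟫ : ℂ)) G where
  eval_one := by simp
  zonalConv_eq H hH := by
    rw [zonalConv, integral_comp_inner (H := fun s => (H s : ℂ) * G.eval (s : ℂ))]
    · simp
    · exact hH.ofReal.aestronglyMeasurable.mul (by fun_prop)

theorem zonalConv_comp_sphereHomeomorph {Φ : ℝ³ ≃ₗᵢ[ℝ] ℝ³} (hΦ : Φ y = y) (H : ℝ → ℝ)
    (g : S² → ℂ) : zonalConv H (g ∘ sphereHomeomorph Φ) y = zonalConv H g y := by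
  have hinner : ∀ x : ℝ³, ⟪Φ x, y⟫ = ⟪x, y⟫ := fun x => by rw [← Φ.inner_map_map x, hΦ]
  have hinvariant := (measurePreserving_sphereHomeomorph Φ.measurePreserving).integral_comp
    (sphereHomeomorph Φ).measurableEmbedding fun x : S² => (H ⟪(x : ℝ³), y⟫ : ℂ) * g x
  simpa only [zonalConv, Function.comp_apply, coe_sphereHomeomorph, hinner] using hinvariant

theorem hasZonalMean_zero {Φ : ℝ³ ≃ₗᵢ[ℝ] ℝ³} (hΦ : Φ y = y) {g : S² → ℂ}
    (hg : ∀ x, g (sphereHomeomorph Φ x) = -g x) : HasZonalMean y g 0 where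
  eval_one := by
    have hy : sphereHomeomorph Φ y = y := Subtype.ext hΦ
    rw [Polynomial.eval_zero, eq_comm, ← self_eq_neg, ← hg, hy]
  zonalConv_eq H _ := by
    have hneg := zonalConv_comp_sphereHomeomorph hΦ H g
    rw [show g ∘ sphereHomeomorph Φ = -g from funext hg] at hneg
    simp only [zonalConv, Pi.neg_apply, mul_neg, integral_neg] at hneg
    simpa [zonalConv] using self_eq_neg.mp hneg.symm

end

section AdaptedCoordinates

/-- The rotation by the angle `θ` about the third coordinate axis. -/
noncomputable def axisRotation (θ : ℝ) : ℝ³ ≃ₗᵢ[ℝ] ℝ³ :=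
  LinearIsometry.toLinearIsometryEquiv
    { toFun := fun z =>
        !₂[Real.cos θ * z 0 - Real.sin θ * z 1, Real.sin θ * z 0 + Real.cos θ * z 1, z 2]
      map_add' := fun x y => by ext i; fin_cases i <;> simp <;> ring
      map_smul' := fun a x => by ext i; fin_cases i <;> simp <;> ring
      norm_map' := fun x => by
        rw [EuclideanSpace.norm_eq, EuclideanSpace.norm_eq]
        congr 1
        simp [Fin.sum_univ_three]
        linear_combination (x 0 ^ 2 + x 1 ^ 2) * Real.sin_sq_add_cos_sq θ }
    rfl

theorem axisRotation_apply (θ : ℝ) (z : ℝ³) : axisRotation θ z =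
    !₂[Real.cos θ * z 0 - Real.sin θ * z 1, Real.sin θ * z 0 + Real.cos θ * z 1, z 2] :=
  rfl

variable (b : OrthonormalBasis (Fin 3) ℝ ℝ³)

/-- The first two coordinates in the basis `b`, as a complex number `w`. -/
noncomputable def planarCoord (x : S²) : ℂ :=
  ⟨b.repr x 0, b.repr x 1⟩

/-- The coordinates `(w, w̄, z)`, where `w` is the planar coordinate and `z` the third coordinate in
the basis `b`. They diagonalize the rotations about `b 2`. -/
noncomputable def adaptedCoord (x : S²) : Fin 3 → ℂ :=
  ![planarCoord b x, conj (planarCoord b x), (b.repr x 2 : ℝ)]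

theorem planarCoord_mul_conj (x : S²) :
    planarCoord b x * conj (planarCoord b x) = 1 - ((b.repr x 2 : ℝ) : ℂ) ^ 2 := by
  have hnorm : ‖b.repr x‖ ^ 2 = 1 := by simp
  rw [EuclideanSpace.real_norm_sq_eq, Fin.sum_univ_three] at hnorm
  rw [Complex.mul_conj, planarCoord, Complex.normSq_mk]
  norm_cast
  linear_combination hnorm

theorem continuous_adaptedCoord : Continuous (adaptedCoord b) := by
  have hplanar : Continuous (planarCoord b) := by
    have : planarCoord b = fun x : S² => Complex.equivRealProdCLM.symm (b.repr x 0, b.repr x 1) :=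
      rfl
    rw [this]
    fun_prop
  refine continuous_pi fun i => ?_
  fin_cases i
  · exact hplanar
  · exact Complex.continuous_conj.comp hplanar
  · exact Complex.continuous_ofReal.comp (by fun_prop)

theorem coe_apply_eq_adaptedCoord (x : S²) (l : Fin 3) :
    (((x : ℝ³) l : ℝ) : ℂ) =
      ⟨b 0 l / 2, -(b 1 l / 2)⟩ * adaptedCoord b x 0 + ⟨b 0 l / 2, b 1 l / 2⟩ * adaptedCoord b x 1 +
        (b 2 l : ℝ) * adaptedCoord b x 2 := by
  have hsum : (x : ℝ³) l = b.repr x 0 * b 0 l + b.repr x 1 * b 1 l + b.repr x 2 * b 2 l := by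
    conv_lhs => rw [← b.sum_repr (x : ℝ³)]
    simp [Fin.sum_univ_three]
  rw [hsum]
  apply Complex.ext <;> simp [adaptedCoord, planarCoord] <;> ring

theorem IsSphericalPolynomial.exists_eq_eval_adaptedCoord {n : ℕ} {f : S² → ℂ}
    (hf : IsSphericalPolynomial n f) : ∃ q : MvPolynomial (Fin 3) ℂ, q.totalDegree ≤ n ∧
      ∀ x, f x = MvPolynomial.eval (adaptedCoord b x) q := by
  obtain ⟨p, hp, hfp⟩ := hf
  let φ : Fin 3 → MvPolynomial (Fin 3) ℂ := fun l =>
    MvPolynomial.C ⟨b 0 l / 2, -(b 1 l / 2)⟩ * MvPolynomial.X 0 +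
      MvPolynomial.C ⟨b 0 l / 2, b 1 l / 2⟩ * MvPolynomial.X 1 +
      MvPolynomial.C (b 2 l : ℂ) * MvPolynomial.X 2
  have hlinear : ∀ (c : ℂ) (j : Fin 3),
      (MvPolynomial.C c * MvPolynomial.X j : MvPolynomial (Fin 3) ℂ).totalDegree ≤ 1 := by
    intro c j
    simpa using MvPolynomial.totalDegree_mul (MvPolynomial.C c) (MvPolynomial.X j)
  have hφ : ∀ l, (φ l).totalDegree ≤ 1 := fun l =>
    (MvPolynomial.totalDegree_add _ _).trans (max_le ((MvPolynomial.totalDegree_add _ _).trans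
      (max_le (hlinear _ _) (hlinear _ _))) (hlinear _ _))
  refine ⟨MvPolynomial.bind₁ φ p, (totalDegree_bind₁_le hφ p).trans hp, fun x => ?_⟩
  have hcoord : (fun l => (((x : ℝ³) l : ℝ) : ℂ)) =
      fun l => MvPolynomial.eval (adaptedCoord b x) (φ l) := by
    ext l
    simp [φ, coe_apply_eq_adaptedCoord b x l]
  rw [hfp, hcoord]
  exact (MvPolynomial.eval₂Hom_bind₁ _ _ _ _).symm

variable {b} {y : S²}

theorem repr_two_eq_inner (hb : b 2 = y) (x : S²) : b.repr x 2 = ⟪(x : ℝ³), y⟫ := by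
  rw [b.repr_apply_apply, hb, real_inner_comm]

theorem hasZonalMean_planarCoord_pow_mul_conj_pow (hb : b 2 = y) {i j : ℕ} (hij : i ≠ j) (k : ℕ) :
    HasZonalMean y (fun x => planarCoord b x ^ i * conj (planarCoord b x) ^ j *
      ((b.repr x 2 : ℝ) : ℂ) ^ k) 0 := by
  have hij' : (i : ℂ) - j ≠ 0 := sub_ne_zero.mpr (Nat.cast_injective.ne hij)
  let θ : ℝ := Real.pi / (i - j)
  let Φ : ℝ³ ≃ₗᵢ[ℝ] ℝ³ := (b.repr.trans (axisRotation θ)).trans b.repr.symm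
  have hrepr : ∀ x : ℝ³, b.repr (Φ x) = axisRotation θ (b.repr x) := fun x => by simp [Φ]
  have hfix : Φ y = y := by
    apply b.repr.injective
    rw [hrepr, ← hb, b.repr_self, axisRotation_apply]
    ext l; fin_cases l; all_goals simp
  have hplanar : ∀ x, planarCoord b (sphereHomeomorph Φ x) =
      Complex.exp (θ * Complex.I) * planarCoord b x := fun x => by
    apply Complex.ext
    all_goals
      simp [planarCoord, hrepr, axisRotation_apply, Complex.exp_ofReal_mul_I_re,
        Complex.exp_ofReal_mul_I_im]
    ring
  have haxial : ∀ x, b.repr (sphereHomeomorph Φ x) 2 = b.repr x 2 := fun x => by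
    simp [hrepr, axisRotation_apply]
  have hphase : Complex.exp (θ * Complex.I) ^ i * conj (Complex.exp (θ * Complex.I)) ^ j = -1 := by
    rw [← Complex.exp_conj, ← Complex.exp_nat_mul, ← Complex.exp_nat_mul, ← Complex.exp_add,
      ← Complex.exp_pi_mul_I]
    congr 1
    simp only [θ, map_mul, Complex.conj_ofReal, Complex.conj_I]
    push_cast
    field_simp
    ring
  refine hasZonalMean_zero hfix fun x => ?_
  rw [hplanar, haxial, map_mul, mul_pow, mul_pow]
  linear_combination planarCoord b x ^ i * conj (planarCoord b x) ^ j *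
    ((b.repr x 2 : ℝ) : ℂ) ^ k * hphase

theorem exists_hasZonalMean_prod_adaptedCoord_pow (hb : b 2 = y) (d : Fin 3 →₀ ℕ) :
    ∃ G : Polynomial ℂ, G.natDegree ≤ d.sum (fun _ e => e) ∧
      HasZonalMean y (fun x => ∏ i, adaptedCoord b x i ^ d i) G := by
  have hdegree : d.sum (fun _ e => e) = d 0 + d 1 + d 2 := by
    rw [Finsupp.sum_fintype _ _ fun _ => rfl, Fin.sum_univ_three]
  rw [hdegree]
  simp only [Fin.prod_univ_three]
  by_cases hd : d 0 = d 1
  · refine ⟨(1 - .X ^ 2) ^ d 1 * .X ^ d 2, ?_, ?_⟩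
    · rw [hd]
      compute_degree
      omega
    · convert hasZonalMean_eval_inner y ((1 - .X ^ 2) ^ d 1 * .X ^ d 2) with x
      simp [adaptedCoord, hd, ← mul_pow, planarCoord_mul_conj, ← repr_two_eq_inner hb]
  · exact ⟨0, by simp, hasZonalMean_planarCoord_pow_mul_conj_pow hb hd _⟩

theorem IsSphericalPolynomial.exists_hasZonalMean {n : ℕ} {f : S² → ℂ}
    (hf : IsSphericalPolynomial n f) (y : S²) :
    ∃ G : Polynomial ℂ, G.natDegree ≤ n ∧ HasZonalMean y f G := by
  obtain ⟨b, hb⟩ := exists_orthonormalBasis_apply_eq (ι := Fin 3) finrank_euclideanSpace 2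
    (norm_eq_of_mem_sphere y)
  obtain ⟨q, hq, hfq⟩ := hf.exists_eq_eval_adaptedCoord b
  choose G hG hmean using exists_hasZonalMean_prod_adaptedCoord_pow hb
  refine ⟨∑ d ∈ q.support, q.coeff d • G d, ?_, ?_⟩
  · refine Polynomial.natDegree_sum_le_of_forall_le _ _ fun d hd => ?_
    exact (Polynomial.natDegree_smul_le _ _).trans
      ((hG d).trans ((MvPolynomial.le_totalDegree hd).trans hq))
  · rw [funext fun x => (hfq x).trans (MvPolynomial.eval_eq' _ _)]
    refine HasZonalMean.sum (fun d _ => ?_) fun d _ => hmean d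
    have := continuous_adaptedCoord b
    fun_prop

end AdaptedCoordinates

section Convolution

variable {H : ℝ → ℝ} {f g : S² → ℂ}

theorem zonalConv_const_mul (H : ℝ → ℝ) (a : ℂ) (f : S² → ℂ) (y : S²) :
    zonalConv H (fun x => a * f x) y = a * zonalConv H f y := by
  simp only [zonalConv, mul_left_comm _ a, integral_const_mul]

theorem conj_zonalConv (H : ℝ → ℝ) (f : S² → ℂ) (y : S²) :
    conj (zonalConv H f y) = zonalConv H (fun x => conj (f x)) y := by
  simp only [zonalConv, ← integral_conj, map_mul, Complex.conj_ofReal]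

theorem exists_forall_norm_kernel_le (hH : Continuous H) :
    ∃ C, ∀ x y : S², ‖(H ⟪(x : ℝ³), y⟫ : ℂ)‖ ≤ C := by
  obtain ⟨C, hC⟩ := isCompact_Icc.exists_bound_of_continuousOn (s := Set.Icc (-1) 1) hH.continuousOn
  exact ⟨C, fun x y => by simpa using hC _ (inner_mem_Icc x y)⟩

theorem continuous_zonalConv (hH : Continuous H) (hf : Integrable f σ) :
    Continuous (zonalConv H f) := by
  obtain ⟨C, hC⟩ := exists_forall_norm_kernel_le hH
  refine continuous_of_dominated (bound := fun x => C * ‖f x‖) (fun y => ?_) (fun y => ?_)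
    (hf.norm.const_mul C) (.of_forall fun x => by fun_prop)
  · exact AEStronglyMeasurable.mul (by fun_prop) hf.aestronglyMeasurable
  · refine .of_forall fun x => ?_
    rw [norm_mul]
    exact mul_le_mul_of_nonneg_right (hC x y) (norm_nonneg _)

theorem integral_mul_zonalConv (hH : Continuous H) (hf : Integrable f σ) (hg : Integrable g σ) :
    ∫ x, f x * zonalConv H g x ∂σ = ∫ x, zonalConv H f x * g x ∂σ := by
  obtain ⟨C, hC⟩ := exists_forall_norm_kernel_le hH
  have hint : Integrable
      (fun p : S² × S² => (H ⟪(p.1 : ℝ³), p.2⟫ : ℂ) * (f p.1 * g p.2)) (Measure.prod σ σ) :=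
    (hf.mul_prod hg).bdd_mul (c := C) (by fun_prop) (.of_forall fun p => hC p.1 p.2)
  calc
    ∫ x, f x * zonalConv H g x ∂σ =
        ∫ x, ∫ z : S², (H ⟪(x : ℝ³), z⟫ : ℂ) * (f x * g z) ∂σ ∂σ := by
      simp only [zonalConv, ← integral_const_mul, real_inner_comm (_ : ℝ³), mul_left_comm (f _)]
    _ = ∫ z, ∫ x : S², (H ⟪(x : ℝ³), z⟫ : ℂ) * (f x * g z) ∂σ ∂σ := integral_integral_swap hint
    _ = ∫ z, zonalConv H f z * g z ∂σ := by
      simp only [zonalConv, ← integral_mul_const, mul_assoc]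

end Convolution

section Harmonics

/-- The Legendre polynomial `P_k` as a zonal kernel. -/
noncomputable abbrev legendreKernel (k : ℕ) (s : ℝ) : ℝ :=
  (legendrePoly k).eval s

/-- The `k`-th Legendre coefficient of a zonal kernel, without normalization. -/
noncomputable def legendreCoeff (H : ℝ → ℝ) (k : ℕ) : ℝ :=
  ∫ s in (-1 : ℝ)..1, H s * legendreKernel k s

/-- The orthogonal projection of `f` onto the spherical harmonics of degree `k`, written as the
convolution with the normalized Legendre kernel. -/
noncomputable def harmonicProj (k : ℕ) (f : S² → ℂ) (y : S²) : ℂ :=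
  ((2 * Real.pi * legendreCoeff (legendreKernel k) k : ℝ) : ℂ)⁻¹ * zonalConv (legendreKernel k) f y

theorem continuous_legendreKernel (k : ℕ) : Continuous (legendreKernel k) :=
  (legendrePoly k).continuous

theorem integrableOn_legendreKernel (k : ℕ) : IntegrableOn (legendreKernel k) (Set.Icc (-1) 1) :=
  (continuous_legendreKernel k).integrableOn_Icc

theorem legendreCoeff_legendreKernel_of_ne {k l : ℕ} (h : k ≠ l) :
    legendreCoeff (legendreKernel k) l = 0 :=
  legendrePoly.integral_mul_eq_zero h

theorem legendreCoeff_legendreKernel_self_pos (k : ℕ) :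
    0 < legendreCoeff (legendreKernel k) k := by
  simpa only [legendreCoeff, ← sq] using legendrePoly.integral_sq_pos k (by norm_num : (-1 : ℝ) < 1)

theorem isSphericalPolynomial_legendreKernel (k : ℕ) (y : S²) :
    IsSphericalPolynomial k fun x => (legendreKernel k ⟪(x : ℝ³), y⟫ : ℂ) := by
  let q : MvPolynomial (Fin 3) ℂ := ∑ i, MvPolynomial.C ((y : ℝ³) i : ℂ) * MvPolynomial.X i
  have hq : q.totalDegree ≤ 1 := MvPolynomial.totalDegree_finsetSum_le fun i _ => by
    simpa using MvPolynomial.totalDegree_mul (MvPolynomial.C ((y : ℝ³) i : ℂ)) (MvPolynomial.X i)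
  have hdeg : (legendrePoly.complexSequence k).natDegree = k :=
    (legendrePoly.complexSequence).natDegree_eq k
  refine ⟨Polynomial.aeval q (legendrePoly.complexSequence k), ?_, fun x => ?_⟩
  · refine (totalDegree_aeval_le _ _).trans ?_
    rw [hdeg]
    exact (Nat.mul_le_mul_left k hq).trans_eq (mul_one k)
  · have hinner : (⟪(x : ℝ³), y⟫ : ℂ) = MvPolynomial.eval (fun i => ((x : ℝ³) i : ℂ)) q := by
      simp [q, PiLp.inner_apply]
    change ((legendreKernel k ⟪(x : ℝ³), y⟫ : ℝ) : ℂ) = _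
    rw [← legendrePoly.eval_complexSequence, hinner]
    exact
      Polynomial.aeval_algHom_apply (MvPolynomial.aeval fun i => ((x : ℝ³) i : ℂ)) q
        (legendrePoly.complexSequence k)

variable {n : ℕ} {f g : S² → ℂ}

theorem IsSphericalPolynomial.continuous (hf : IsSphericalPolynomial n f) : Continuous f := by
  obtain ⟨p, -, hp⟩ := hf
  rw [funext hp]
  exact (MvPolynomial.continuous_eval p).comp (by fun_prop)

theorem HasZonalMean.zonalConv_eq_sum {y : S²} {c : ℕ → ℂ}
    (h : HasZonalMean y f (∑ k ∈ Finset.range (n + 1), c k • legendrePoly.complexSequence k))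
    {H : ℝ → ℝ} (hH : IntegrableOn H (Set.Icc (-1) 1)) :
    zonalConv H f y =
      ∑ k ∈ Finset.range (n + 1), ((2 * Real.pi * legendreCoeff H k : ℝ) : ℂ) * c k := by
  have hint : ∀ k ∈ Finset.range (n + 1), IntervalIntegrable
      (fun s : ℝ => c k * ((H s * legendreKernel k s : ℝ) : ℂ)) volume (-1) 1 := fun k _ => by
    rw [intervalIntegrable_iff_integrableOn_Icc_of_le (by norm_num)]
    exact ((hH.mul_continuousOn (continuous_legendreKernel k).continuousOn isCompact_Icc).ofReal
      ).const_mul _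
  simp only [h.zonalConv_eq H hH, Polynomial.eval_finsetSum, Polynomial.eval_smul, smul_eq_mul,
    legendrePoly.eval_complexSequence, Finset.mul_sum, mul_left_comm _ (c _), ← Complex.ofReal_mul]
  rw [intervalIntegral.integral_finsetSum hint, Finset.mul_sum]
  refine Finset.sum_congr rfl fun k _ => ?_
  rw [intervalIntegral.integral_const_mul, intervalIntegral.integral_ofReal]
  simp only [legendreCoeff, Complex.ofReal_mul, Complex.ofReal_ofNat]
  ring

theorem IsSphericalPolynomial.zonal_expansion (hf : IsSphericalPolynomial n f) (y : S²) :
    f y = ∑ k ∈ Finset.range (n + 1), harmonicProj k f y ∧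
      ∀ H : ℝ → ℝ, IntegrableOn H (Set.Icc (-1) 1) → zonalConv H f y =
        ∑ k ∈ Finset.range (n + 1), ((2 * Real.pi * legendreCoeff H k : ℝ) : ℂ) *
          harmonicProj k f y := by
  obtain ⟨G, hG, hmean⟩ := hf.exists_hasZonalMean y
  obtain ⟨c, rfl⟩ := legendrePoly.exists_eq_sum hG
  have hc : ∀ l ∈ Finset.range (n + 1), harmonicProj l f y = c l := fun l hl => by
    have hpos := mul_pos Real.two_pi_pos (legendreCoeff_legendreKernel_self_pos l)
    rw [harmonicProj, hmean.zonalConv_eq_sum (integrableOn_legendreKernel l),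
      Finset.sum_eq_single_of_mem l hl, inv_mul_cancel_left₀ (Complex.ofReal_ne_zero.mpr hpos.ne')]
    intro k _ hkl
    rw [legendreCoeff_legendreKernel_of_ne hkl.symm, mul_zero, Complex.ofReal_zero, zero_mul]
  refine ⟨?_, fun H hH => ?_⟩
  · rw [Finset.sum_congr rfl hc, ← hmean.eval_one, Polynomial.eval_finsetSum]
    refine Finset.sum_congr rfl fun k _ => ?_
    rw [Polynomial.eval_smul, ← Complex.ofReal_one, legendrePoly.eval_complexSequence,
      legendrePoly.eval_one, Complex.ofReal_one, smul_eq_mul, mul_one]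
  · rw [hmean.zonalConv_eq_sum hH]
    exact Finset.sum_congr rfl fun k hk => by rw [hc k hk]

theorem IsSphericalPolynomial.zonalConv_legendreKernel_eq_zero (hf : IsSphericalPolynomial n f)
    {l : ℕ} (hl : n < l) (y : S²) : zonalConv (legendreKernel l) f y = 0 := by
  rw [(hf.zonal_expansion y).2 _ (integrableOn_legendreKernel l)]
  refine Finset.sum_eq_zero fun k hk => ?_
  have hne : l ≠ k := (Finset.mem_range_succ_iff.mp hk).trans_lt hl |>.ne'
  rw [legendreCoeff_legendreKernel_of_ne hne, mul_zero, Complex.ofReal_zero, zero_mul]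

theorem zonalConv_legendreKernel_comm (k l : ℕ) (x y : S²) :
    zonalConv (legendreKernel k) (fun z => (legendreKernel l ⟪(z : ℝ³), x⟫ : ℂ)) y =
      zonalConv (legendreKernel l) (fun z => (legendreKernel k ⟪(z : ℝ³), y⟫ : ℂ)) x := by
  simp only [zonalConv, mul_comm (legendreKernel k _ : ℂ)]

theorem zonalConv_legendreKernel {H : ℝ → ℝ} (hH : IntegrableOn H (Set.Icc (-1) 1)) (l : ℕ)
    (x y : S²) : zonalConv H (fun z => (legendreKernel l ⟪(z : ℝ³), x⟫ : ℂ)) y =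
      ((2 * Real.pi * legendreCoeff H l : ℝ) : ℂ) * (legendreKernel l ⟪(y : ℝ³), x⟫ : ℂ) := by
  have hpoly := isSphericalPolynomial_legendreKernel l x
  have hproj : ∀ k ∈ Finset.range (l + 1), k ≠ l →
      harmonicProj k (fun z => (legendreKernel l ⟪(z : ℝ³), x⟫ : ℂ)) y = 0 := fun k hk hkl => by
    have hlt : k < l := lt_of_le_of_ne (Finset.mem_range_succ_iff.mp hk) hkl
    rw [harmonicProj, zonalConv_legendreKernel_comm,
      (isSphericalPolynomial_legendreKernel k y).zonalConv_legendreKernel_eq_zero hlt, mul_zero]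
  have hself := Finset.self_mem_range_succ l
  rw [(hpoly.zonal_expansion y).1, (hpoly.zonal_expansion y).2 H hH,
    Finset.sum_eq_single_of_mem l hself hproj, Finset.sum_eq_single_of_mem l hself]
  exact fun k hk hkl => by rw [hproj k hk hkl, mul_zero]

theorem zonalConv_zonalConv_legendreKernel {H : ℝ → ℝ} (hH : IntegrableOn H (Set.Icc (-1) 1))
    (l : ℕ) (hf : Integrable f σ) (y : S²) : zonalConv H (zonalConv (legendreKernel l) f) y =
      ((2 * Real.pi * legendreCoeff H l : ℝ) : ℂ) * zonalConv (legendreKernel l) f y := by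
  have hkernel := integrable_comp_inner (H := fun s => (H s : ℂ)) hH.ofReal y
  rw [zonalConv, integral_mul_zonalConv (continuous_legendreKernel l) hkernel hf, zonalConv,
    ← integral_const_mul]
  refine integral_congr_ae (.of_forall fun z => ?_)
  have hswap : zonalConv (legendreKernel l) (fun x => (H ⟪(x : ℝ³), y⟫ : ℂ)) z =
      zonalConv H (fun x => (legendreKernel l ⟪(x : ℝ³), z⟫ : ℂ)) y := by
    simp only [zonalConv, mul_comm (H _ : ℂ)]
  change zonalConv _ _ z * f z = _
  rw [hswap, zonalConv_legendreKernel hH, real_inner_comm, mul_assoc]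

theorem zonalConv_harmonicProj {H : ℝ → ℝ} (hH : IntegrableOn H (Set.Icc (-1) 1)) (l : ℕ)
    (hf : Integrable f σ) (y : S²) : zonalConv H (harmonicProj l f) y =
      ((2 * Real.pi * legendreCoeff H l : ℝ) : ℂ) * harmonicProj l f y := by
  change zonalConv H (fun x => _ * zonalConv (legendreKernel l) f x) y = _
  rw [zonalConv_const_mul, zonalConv_zonalConv_legendreKernel hH l hf, harmonicProj, mul_left_comm]

theorem continuous_harmonicProj (k : ℕ) (hf : Integrable f σ) : Continuous (harmonicProj k f) :=
  continuous_const.mul (continuous_zonalConv (continuous_legendreKernel k) hf)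

theorem conj_harmonicProj (k : ℕ) (f : S² → ℂ) (y : S²) :
    conj (harmonicProj k f y) = harmonicProj k (fun x => conj (f x)) y := by
  rw [harmonicProj, map_mul, conj_zonalConv, map_inv₀, Complex.conj_ofReal, harmonicProj]

theorem integral_mul_harmonicProj (k : ℕ) (hf : Integrable f σ) (hg : Integrable g σ) :
    ∫ x, f x * harmonicProj k g x ∂σ = ∫ x, harmonicProj k f x * g x ∂σ := by
  simp only [harmonicProj, mul_left_comm (f _), mul_assoc, integral_const_mul,
    integral_mul_zonalConv (continuous_legendreKernel k) hf hg]

theorem harmonicProj_harmonicProj_of_ne {k l : ℕ} (h : k ≠ l) (hf : Integrable f σ) (y : S²) :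
    harmonicProj k (harmonicProj l f) y = 0 := by
  rw [harmonicProj, zonalConv_harmonicProj (integrableOn_legendreKernel k) l hf,
    legendreCoeff_legendreKernel_of_ne h, mul_zero, Complex.ofReal_zero, zero_mul, mul_zero]

theorem integral_harmonicProj_mul_conj {k l : ℕ} (h : k ≠ l) (hf : Integrable f σ) :
    ∫ x, harmonicProj k f x * conj (harmonicProj l f x) ∂σ = 0 := by
  have hconj : Integrable (fun z => conj (f z)) σ := Complex.conjCLE.integrable_comp_iff.mpr hf
  simp only [conj_harmonicProj]
  rw [integral_mul_harmonicProj l (integrable_of_continuous (continuous_harmonicProj k hf)) hconj]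
  simp only [harmonicProj_harmonicProj_of_ne h.symm hf, zero_mul, integral_zero]

end Harmonics

section SquareIntegrable

variable {α 𝕜 : Type*} [MeasurableSpace α] [RCLike 𝕜] {μ : Measure α}

theorem norm_integral_mul_sq_le {u v : α → 𝕜} (hu : MemLp u 2 μ) (hv : MemLp v 2 μ) :
    ‖∫ x, u x * v x ∂μ‖ ^ 2 ≤ (∫ x, ‖u x‖ ^ 2 ∂μ) * ∫ x, ‖v x‖ ^ 2 ∂μ := by
  have hHolder : ‖∫ x, u x * v x ∂μ‖ ≤ √(∫ x, ‖u x‖ ^ 2 ∂μ) * √(∫ x, ‖v x‖ ^ 2 ∂μ) := by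
    refine (norm_integral_le_integral_norm _).trans ?_
    simpa [Real.sqrt_eq_rpow] using integral_mul_norm_le_Lp_mul_Lq (p := 2) (q := 2)
      Real.HolderConjugate.two_two (f := u) (g := v) (by simpa using hu) (by simpa using hv)
  refine (pow_le_pow_left₀ (norm_nonneg _) hHolder 2).trans_eq ?_
  rw [mul_pow, Real.sq_sqrt (integral_nonneg fun _ => by positivity),
    Real.sq_sqrt (integral_nonneg fun _ => by positivity)]

theorem integral_norm_sq_sum {ι : Type*} {s : Finset ι} {u : ι → α → 𝕜}
    (hu : ∀ i ∈ s, MemLp (u i) 2 μ)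
    (horth : ∀ i ∈ s, ∀ j ∈ s, i ≠ j → ∫ x, u i x * conj (u j x) ∂μ = 0) :
    ∫ x, ‖∑ i ∈ s, u i x‖ ^ 2 ∂μ = ∑ i ∈ s, ∫ x, ‖u i x‖ ^ 2 ∂μ := by
  have hint : ∀ i ∈ s, ∀ j ∈ s, Integrable (fun x => u i x * conj (u j x)) μ :=
    fun i hi j hj => (hu i hi).integrable_mul (hu j hj).star
  apply RCLike.ofReal_injective (K := 𝕜)
  simp only [← integral_ofReal, RCLike.ofReal_pow, ← RCLike.mul_conj, map_sum,
    Finset.sum_mul_sum]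
  rw [integral_finsetSum s fun i hi => integrable_finsetSum s fun j hj => hint i hi j hj]
  refine Finset.sum_congr rfl fun i hi => ?_
  rw [integral_finsetSum s fun j hj => hint i hi j hj, Finset.sum_eq_single_of_mem i hi]
  exact fun j hj hji => horth i hi j hj hji.symm

end SquareIntegrable

section Inversion

variable {n : ℕ} {H : ℝ → ℝ} {f : S² → ℂ}

theorem memLp_of_continuous {g : S² → ℂ} (hg : Continuous g) : MemLp g 2 σ :=
  hg.memLp_of_hasCompactSupport (.of_compactSpace _)

theorem integral_norm_sq_sum_harmonicProj (s : Finset ℕ) (a : ℕ → ℂ) (hf : Integrable f σ) :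
    ∫ x, ‖∑ k ∈ s, a k * harmonicProj k f x‖ ^ 2 ∂σ =
      ∑ k ∈ s, ‖a k‖ ^ 2 * ∫ x, ‖harmonicProj k f x‖ ^ 2 ∂σ := by
  rw [integral_norm_sq_sum fun k _ =>
    memLp_of_continuous ((continuous_harmonicProj k hf).const_mul (a k))]
  · simp only [norm_mul, mul_pow, integral_const_mul]
  · intro k _ l _ hkl
    have hfactor : ∀ x, a k * harmonicProj k f x * conj (a l * harmonicProj l f x) =
        a k * conj (a l) * (harmonicProj k f x * conj (harmonicProj l f x)) := fun x => by
      rw [map_mul, mul_mul_mul_comm]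
    simp only [hfactor, integral_const_mul, integral_harmonicProj_mul_conj hkl hf, mul_zero]

theorem IsSphericalPolynomial.exists_zonalConv_eq (hf : IsSphericalPolynomial n f)
    (hH : IntegrableOn H (Set.Icc (-1) 1)) {c : ℝ} (hc : 0 < c)
    (hcoeff : ∀ k ≤ n, c ≤ |legendreCoeff H k|) :
    ∃ g : S² → ℂ, Continuous g ∧ zonalConv H g = f ∧
      (2 * Real.pi * c) ^ 2 * ∫ x, ‖g x‖ ^ 2 ∂σ ≤ ∫ x, ‖f x‖ ^ 2 ∂σ := by
  have hfi := integrable_of_continuous hf.continuous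
  let eigenvalue : ℕ → ℂ := fun k => ((2 * Real.pi * legendreCoeff H k : ℝ) : ℂ)
  have hle : ∀ k ∈ Finset.range (n + 1), 2 * Real.pi * c ≤ ‖eigenvalue k‖ := fun k hk => by
    rw [Complex.norm_real, Real.norm_eq_abs, abs_mul, abs_of_pos Real.two_pi_pos]
    exact mul_le_mul_of_nonneg_left (hcoeff k (Finset.mem_range_succ_iff.mp hk)) Real.two_pi_pos.le
  have hpos : 0 < 2 * Real.pi * c := mul_pos Real.two_pi_pos hc
  refine ⟨fun x => ∑ k ∈ Finset.range (n + 1), (eigenvalue k)⁻¹ * harmonicProj k f x,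
    continuous_finsetSum _ fun k _ => (continuous_harmonicProj k hfi).const_mul _, ?_, ?_⟩
  · ext y
    rw [zonalConv_sum _ _ hH fun k _ => continuous_harmonicProj k hfi, (hf.zonal_expansion y).1]
    refine Finset.sum_congr rfl fun k hk => ?_
    rw [zonalConv_harmonicProj hH k hfi,
      inv_mul_cancel_left₀ (norm_pos_iff.mp (hpos.trans_le (hle k hk)))]
  · have hnorm := integral_norm_sq_sum_harmonicProj (Finset.range (n + 1)) 1 hfi
    simp only [Pi.one_apply, norm_one, one_pow, one_mul, ← (hf.zonal_expansion _).1] at hnorm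
    rw [hnorm, integral_norm_sq_sum_harmonicProj _ _ hfi, Finset.mul_sum]
    refine Finset.sum_le_sum fun k hk => ?_
    rw [← mul_assoc, ← mul_pow, norm_inv, ← div_eq_mul_inv]
    refine mul_le_of_le_one_left (integral_nonneg fun _ => by positivity) (pow_le_one₀ ?_ ?_)
    · positivity
    · exact div_le_one_of_le₀ (hle k hk) (norm_nonneg _)

end Inversion

section Caps

/-- The spherical cap `C_t(y)` with centre `y` and angular radius `arccos t`. -/
def cap (t : ℝ) (y : S²) : Set S² :=
  {x | t ≤ ⟪(x : ℝ³), y⟫}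

/-- The maximal density `ρ` of a measure on the sphere relative to the surface measure, over all
caps of angular radius `arccos t`. -/
noncomputable def capDensity (μ : Measure S²) (t : ℝ) : ℝ :=
  ⨆ y, μ.real (cap t y) / (σ).real (cap t y)

variable {t : ℝ} {μ : Measure S²}

theorem mem_cap_comm {x y : S²} : x ∈ cap t y ↔ y ∈ cap t x := by
  simp only [cap, Set.mem_ofPred_eq, real_inner_comm]

theorem measurableSet_cap (t : ℝ) (y : S²) : MeasurableSet (cap t y) :=
  measurableSet_le (by fun_prop) (by fun_prop)

theorem intervalIntegral_indicator_Ici (ht : t ∈ Set.Icc (-1) 1) (F : ℝ → ℝ) :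
    ∫ s in (-1 : ℝ)..1, (Set.Ici t).indicator F s = ∫ s in t..1, F s := by
  rw [intervalIntegral.integral_of_le (by norm_num), intervalIntegral.integral_of_le ht.2,
    ← integral_Icc_eq_integral_Ioc, ← integral_Icc_eq_integral_Ioc,
    setIntegral_indicator measurableSet_Ici, ← Set.Ici_inter_Iic, Set.inter_right_comm,
    Set.Ici_inter_Ici, sup_eq_right.mpr ht.1, Set.Ici_inter_Iic]

theorem measureReal_toSphere_cap (ht : t ∈ Set.Icc (-1) 1) (y : S²) :
    (σ).real (cap t y) = 2 * Real.pi * (1 - t) := by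
  have hint := integral_comp_inner (H := (Set.Ici t).indicator (1 : ℝ → ℝ))
    (measurable_one.indicator measurableSet_Ici).aestronglyMeasurable y
  rw [intervalIntegral_indicator_Ici ht] at hint
  calc
    (σ).real (cap t y) = ∫ x : S², (Set.Ici t).indicator 1 ⟪(x : ℝ³), y⟫ ∂σ :=
      (integral_indicator_one (measurableSet_cap t y)).symm
    _ = 2 * Real.pi * (1 - t) := by simpa using hint

theorem capDensity_nonneg (μ : Measure S²) (t : ℝ) : 0 ≤ capDensity μ t :=
  Real.iSup_nonneg fun _ => by positivity

variable [IsFiniteMeasure μ]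

theorem measureReal_cap_le (ht : t ∈ Set.Ico (-1) 1) (y : S²) :
    μ.real (cap t y) ≤ capDensity μ t * (2 * Real.pi * (1 - t)) := by
  have hvol := fun y => measureReal_toSphere_cap (Set.Ico_subset_Icc_self ht) y
  have hpos : 0 < 2 * Real.pi * (1 - t) := mul_pos Real.two_pi_pos (sub_pos.mpr ht.2)
  have hbdd : BddAbove (Set.range fun y => μ.real (cap t y) / (σ).real (cap t y)) := by
    refine ⟨μ.real Set.univ / (2 * Real.pi * (1 - t)), ?_⟩
    rintro _ ⟨y, rfl⟩
    simp only [hvol]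
    exact div_le_div_of_nonneg_right (measureReal_mono (Set.subset_univ _)) hpos.le
  have hle := le_ciSup hbdd y
  rwa [hvol, div_le_iff₀ hpos] at hle

section

variable {E : Type*} [NormedAddCommGroup E] {F : S² → E}

theorem integrable_indicator_cap (t : ℝ) (hF : Integrable F σ) :
    Integrable (fun p : S² × S² => (cap t p.1).indicator F p.2) (μ.prod σ) := by
  have hcap : MeasurableSet {p : S² × S² | t ≤ ⟪(p.2 : ℝ³), p.1⟫} :=
    measurableSet_le (by fun_prop) (by fun_prop)
  exact (hF.comp_snd μ).indicator hcap

variable [NormedSpace ℝ E]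

theorem integrable_setIntegral_cap (t : ℝ) (hF : Integrable F σ) :
    Integrable (fun y => ∫ x in cap t y, F x ∂σ) μ := by
  simpa only [integral_indicator (measurableSet_cap t _)] using
    (integrable_indicator_cap (μ := μ) t hF).integral_prod_left

theorem integral_setIntegral_cap [CompleteSpace E] (t : ℝ) (hF : Integrable F σ) :
    ∫ y, ∫ x in cap t y, F x ∂σ ∂μ = ∫ x, μ.real (cap t x) • F x ∂σ := by
  have hswap : ∀ x y, (cap t y).indicator F x = (cap t x).indicator (fun _ => F x) y :=
    fun x y => by
      classical
      rw [Set.indicator_apply, Set.indicator_apply]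
      exact if_congr mem_cap_comm rfl rfl
  calc
    ∫ y, ∫ x in cap t y, F x ∂σ ∂μ = ∫ y, ∫ x, (cap t y).indicator F x ∂σ ∂μ := by
      simp only [integral_indicator (measurableSet_cap t _)]
    _ = ∫ x, ∫ y, (cap t y).indicator F x ∂μ ∂σ :=
      integral_integral_swap (integrable_indicator_cap t hF)
    _ = ∫ x, μ.real (cap t x) • F x ∂σ := by
      simp only [hswap, integral_indicator (measurableSet_cap t _), setIntegral_const]

end

variable {H : ℝ → ℝ} {g : S² → ℂ}

theorem norm_zonalConv_sq_le (hH : MemLp H 2 (volume.restrict (Set.Icc (-1) 1)))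
    (hsupp : Function.support H ⊆ Set.Ici t) (hg : MemLp g 2 σ) (y : S²) :
    ‖zonalConv H g y‖ ^ 2 ≤
      (2 * Real.pi * ∫ s in (-1 : ℝ)..1, H s ^ 2) * ∫ x in cap t y, ‖g x‖ ^ 2 ∂σ := by
  have hkernel_meas := aestronglyMeasurable_comp_inner hH.aestronglyMeasurable y
  have hkernel_sq := integrable_comp_inner (H := fun s => H s ^ 2) hH.integrable_sq y
  have hkernel : MemLp (fun x : S² => (H ⟪(x : ℝ³), y⟫ : ℂ)) 2 σ :=
    ((memLp_two_iff_integrable_sq hkernel_meas).mpr hkernel_sq).ofReal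
  have hlocal : zonalConv H g y = ∫ x in cap t y, (H ⟪(x : ℝ³), y⟫ : ℂ) * g x ∂σ := by
    refine (setIntegral_eq_integral_of_forall_compl_eq_zero fun x hx => ?_).symm
    rw [Function.notMem_support.mp fun h => hx (hsupp h), Complex.ofReal_zero, zero_mul]
  have hmass : ∫ x : S², H ⟪(x : ℝ³), y⟫ ^ 2 ∂σ = 2 * Real.pi * ∫ s in (-1 : ℝ)..1, H s ^ 2 :=
    integral_comp_inner (H := fun s => H s ^ 2) hH.integrable_sq.aestronglyMeasurable y
  rw [hlocal, ← hmass]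
  refine (norm_integral_mul_sq_le (hkernel.restrict _) (hg.restrict _)).trans
    (mul_le_mul_of_nonneg_right ?_ (integral_nonneg fun _ => by positivity))
  simp only [Complex.norm_real, Real.norm_eq_abs, sq_abs]
  exact setIntegral_le_integral hkernel_sq (.of_forall fun _ => sq_nonneg _)

theorem integral_norm_zonalConv_sq_le (ht : t ∈ Set.Ico (-1) 1)
    (hH : MemLp H 2 (volume.restrict (Set.Icc (-1) 1)))
    (hsupp : Function.support H ⊆ Set.Ici t) (hg : MemLp g 2 σ) :
    ∫ y, ‖zonalConv H g y‖ ^ 2 ∂μ ≤ (2 * Real.pi * ∫ s in (-1 : ℝ)..1, H s ^ 2) *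
      (capDensity μ t * (2 * Real.pi * (1 - t)) * ∫ x, ‖g x‖ ^ 2 ∂σ) := by
  have hg_sq : Integrable (fun x => ‖g x‖ ^ 2) σ := hg.integrable_norm_pow two_ne_zero
  have hmass : 0 ≤ ∫ s in (-1 : ℝ)..1, H s ^ 2 :=
    intervalIntegral.integral_nonneg (by norm_num) fun _ _ => sq_nonneg _
  calc
    ∫ y, ‖zonalConv H g y‖ ^ 2 ∂μ ≤
        ∫ y, (2 * Real.pi * ∫ s in (-1 : ℝ)..1, H s ^ 2) * ∫ x in cap t y, ‖g x‖ ^ 2 ∂σ ∂μ :=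
      integral_mono_of_nonneg (.of_forall fun _ => by positivity)
        ((integrable_setIntegral_cap t hg_sq).const_mul _)
        (.of_forall (norm_zonalConv_sq_le hH hsupp hg))
    _ = (2 * Real.pi * ∫ s in (-1 : ℝ)..1, H s ^ 2) *
        ∫ x, μ.real (cap t x) * ‖g x‖ ^ 2 ∂σ := by
      rw [integral_const_mul, integral_setIntegral_cap t hg_sq]
      rfl
    _ ≤ (2 * Real.pi * ∫ s in (-1 : ℝ)..1, H s ^ 2) *
        ∫ x, capDensity μ t * (2 * Real.pi * (1 - t)) * ‖g x‖ ^ 2 ∂σ := by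
      refine mul_le_mul_of_nonneg_left ?_ (by positivity)
      refine integral_mono_of_nonneg (.of_forall fun _ => by positivity) (hg_sq.const_mul _)
        (.of_forall fun x => ?_)
      exact mul_le_mul_of_nonneg_right (measureReal_cap_le ht x) (by positivity)
    _ = _ := by rw [integral_const_mul]

end Caps

section CapKernel

variable {L : ℕ} {t : ℝ}

/-- The zonal kernel `P_L · 1_[t, 1]`, that is, the Legendre kernel of degree `L` truncated to the
cap of angular radius `arccos t`. -/
noncomputable def capKernel (L : ℕ) (t : ℝ) : ℝ → ℝ :=
  (Set.Ici t).indicator (legendreKernel L)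

theorem memLp_capKernel (L : ℕ) (t : ℝ) :
    MemLp (capKernel L t) 2 (volume.restrict (Set.Icc (-1) 1)) := by
  have hL : MemLp (legendreKernel L) 2 (volume.restrict (Set.Icc (-1) 1)) :=
    (memLp_two_iff_integrable_sq (continuous_legendreKernel L).aestronglyMeasurable).mpr
      ((continuous_legendreKernel L).pow 2).integrableOn_Icc
  exact hL.indicator measurableSet_Ici

theorem legendreCoeff_capKernel (ht : t ∈ Set.Icc (-1) 1) (k : ℕ) :
    legendreCoeff (capKernel L t) k = ∫ s in t..1, legendreKernel L s * legendreKernel k s := by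
  simp only [legendreCoeff, capKernel, ← Set.indicator_mul_left, intervalIntegral_indicator_Ici ht]

theorem integral_capKernel_sq (ht : t ∈ Set.Icc (-1) 1) :
    ∫ s in (-1 : ℝ)..1, capKernel L t s ^ 2 = ∫ s in t..1, legendreKernel L s ^ 2 := by
  rw [← intervalIntegral_indicator_Ici ht]
  congr 1 with s
  by_cases hs : s ∈ Set.Ici t <;> simp [capKernel, hs]

theorem integral_sq_le_legendreCoeff_capKernel (ht : t ∈ Set.Icc (-1) 1)
    (hmax : ∀ s, (legendrePoly L).eval s = 0 → s ≤ t) {k : ℕ} (hk : k ≤ L) :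
    ∫ s in t..1, legendreKernel L s ^ 2 ≤ legendreCoeff (capKernel L t) k := by
  rw [legendreCoeff_capKernel ht]
  refine intervalIntegral.integral_mono_on_of_le_Ioo ht.2
    (Continuous.intervalIntegrable (by fun_prop) _ _)
    (Continuous.intervalIntegrable (by fun_prop) _ _) fun s hs => ?_
  obtain ⟨hpos, hle⟩ :=
    legendrePoly.eval_le_eval_of_forall_zero_le hk ht.1 hmax (Set.Ioo_subset_Ioc_self hs)
  rw [sq]
  exact mul_le_mul_of_nonneg_left hle hpos.le

end CapKernel

theorem capDensity_restrict (Ω : Set S²) (t : ℝ) : capDensity ((σ).restrict Ω) t =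
    ⨆ y, ((σ) (Ω ∩ cap t y)).toReal / ((σ) (cap t y)).toReal := by
  simp only [capDensity, Measure.real, Measure.restrict_apply (measurableSet_cap t _),
    Set.inter_comm]

end SphericalLargeSieve

open SphericalLargeSieve in
theorem large_sieve_spherical_harmonics_general (L : ℕ) (t : ℝ) (ht : t ∈ Set.Ico (-1) 1)
    (hmax : ∀ s : ℝ, (legendrePoly L).eval s = 0 → s ≤ t)
    (f : Metric.sphere (0 : EuclideanSpace ℝ (Fin 3)) 1 → ℂ) (hf : IsSphericalPolynomial L f)
    (μ : Measure (Metric.sphere (0 : EuclideanSpace ℝ (Fin 3)) 1)) [IsFiniteMeasure μ] :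
    ∫ x, ‖f x‖ ^ 2 ∂μ ≤ ((1 - t) * (∫ s in Set.Icc t 1, (legendrePoly L).eval s ^ 2)⁻¹) *
      capDensity μ t *
      ∫ x, ‖f x‖ ^ 2 ∂(volume : Measure (EuclideanSpace ℝ (Fin 3))).toSphere := by
  rw [integral_Icc_eq_integral_Ioc, ← intervalIntegral.integral_of_le ht.2.le]
  set c := ∫ s in t..1, (legendrePoly L).eval s ^ 2
  have ht' : t ∈ Set.Icc (-1 : ℝ) 1 := Set.Ico_subset_Icc_self ht
  have hc : 0 < c := legendrePoly.integral_sq_pos L ht.2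
  have hL2 := memLp_capKernel L t
  obtain ⟨g, hg, rfl, hnorm⟩ := hf.exists_zonalConv_eq (hL2.integrable one_le_two) hc fun k hk =>
    (integral_sq_le_legendreCoeff_capKernel ht' hmax hk).trans (le_abs_self _)
  have hsieve := integral_norm_zonalConv_sq_le (μ := μ) ht hL2 Set.support_indicator_subset
    (memLp_of_continuous hg)
  rw [integral_capKernel_sq ht'] at hsieve
  have hconst : 0 ≤ (1 - t) * c⁻¹ * capDensity μ t :=
    mul_nonneg (mul_nonneg (sub_nonneg.mpr ht'.2) (inv_nonneg.mpr hc.le)) (capDensity_nonneg μ t)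
  calc
    _ ≤ _ := hsieve
    _ = (1 - t) * c⁻¹ * capDensity μ t * ((2 * Real.pi * c) ^ 2 * ∫ x, ‖g x‖ ^ 2 ∂_) := by
      change 2 * Real.pi * c * _ = _
      field_simp
    _ ≤ _ := mul_le_mul_of_nonneg_left hnorm hconst

/-- **large sieve for finite spherical harmonics expansions, `p = 2`.**
Let `L ≥ 1`, let `S_L` be the space of restrictions to the unit sphere `S² ⊂ ℝ³` of
complex polynomials of degree at most `L`, let `t = t_{L,L} ∈ (0,1)` be the largest zero
of the Legendre polynomial `P_L`, and for `y ∈ S²` let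
`C_t(y) = {x ∈ S² : ⟨x, y⟩ ≥ t}` be the corresponding spherical cap.  With
`ρ_{S²}(Ω, L) = sup_y σ(Ω ∩ C_t(y)) / σ(C_t(y))` and
`B_L = (1 - t) (∫_t^1 P_L(s)² ds)⁻¹`, every measurable `Ω ⊆ S²` and every nonzero
`f ∈ S_L` satisfy `∫_Ω |f|² dσ ≤ B_L · ρ_{S²}(Ω, L) · ∫_{S²} |f|² dσ`. -/
theorem large_sieve_spherical_harmonics
    (L : ℕ) (hL : 1 ≤ L)
    (t : ℝ) (ht : t ∈ Set.Ioo (0 : ℝ) 1)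
    (hroot : (legendrePoly L).eval t = 0)
    (hmax : ∀ s : ℝ, (legendrePoly L).eval s = 0 → s ≤ t)
    (f : Metric.sphere (0 : EuclideanSpace ℝ (Fin 3)) 1 → ℂ)
    (hf : ∃ p : MvPolynomial (Fin 3) ℂ, p.totalDegree ≤ L ∧
      ∀ x : Metric.sphere (0 : EuclideanSpace ℝ (Fin 3)) 1,
        f x = MvPolynomial.eval (fun i => ((x : EuclideanSpace ℝ (Fin 3)) i : ℂ)) p)
    (hf0 : f ≠ 0)
    (Ω : Set (Metric.sphere (0 : EuclideanSpace ℝ (Fin 3)) 1)) (hΩ : MeasurableSet Ω) :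
    (∫ x in Ω, ‖f x‖ ^ 2 ∂(volume : Measure (EuclideanSpace ℝ (Fin 3))).toSphere) ≤
      ((1 - t) * (∫ s in Set.Icc t 1, (legendrePoly L).eval s ^ 2)⁻¹) *
      (⨆ y : Metric.sphere (0 : EuclideanSpace ℝ (Fin 3)) 1,
        ((volume : Measure (EuclideanSpace ℝ (Fin 3))).toSphere
            (Ω ∩ {x : Metric.sphere (0 : EuclideanSpace ℝ (Fin 3)) 1 |
              t ≤ inner (𝕜 := ℝ) (x : EuclideanSpace ℝ (Fin 3)) (y : EuclideanSpace ℝ (Fin 3))})).toReal /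
          ((volume : Measure (EuclideanSpace ℝ (Fin 3))).toSphere
            {x : Metric.sphere (0 : EuclideanSpace ℝ (Fin 3)) 1 |
              t ≤ inner (𝕜 := ℝ) (x : EuclideanSpace ℝ (Fin 3)) (y : EuclideanSpace ℝ (Fin 3))}).toReal) *
      ∫ x, ‖f x‖ ^ 2 ∂(volume : Measure (EuclideanSpace ℝ (Fin 3))).toSphere := by
  have hsieve := large_sieve_spherical_harmonics_general L t ⟨by linarith [ht.1], ht.2⟩ hmax f hf
    ((volume : Measure (EuclideanSpace ℝ (Fin 3))).toSphere.restrict Ω)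
  rwa [SphericalLargeSieve.capDensity_restrict] at hsieve
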